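/- arXiv:1911.10505 — 6 statements merged into one kernel-verified Lean document; each statement's English description precedes it below -/
import Mathlib

section
/- Fix a flow network, a feasible flow x̄ ∈ X, a budget Γ ∈ ℕ, and an attack μ : E → {0,1} with μ_{e_ts} = 0 and Σ_{e∈E} μ_e ≤ Γ. Consider the problem of maximizing y_{e_ts} − Σ_{e∈E} p_e z_e over y, z, π : E → ℝ subject to: y_e ≥ 0 and z_e ≥ 0 for every e; Σ_{e entering v} y_e ≥ Σ_{e leaving v} y_e for every node v ≠ s; y_e ≤ (1 − μ_e) U_e for every e; y_e ≤ (1 − π_e) x̄_e + π_e U_e for every e; π_e ≤ Σ_{e' ∈ ρ_e} μ_{e'} for every e; and z_e ≥ y_e − x̄_e for every e. Then the supremum of the objective subject additionally to π_e ∈ {0,1} for every e is equal to the supremum of the objective subject additionally to 0 ≤ π_e ≤ 1 for every e. -/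
attribute [local instance] Classical.propDecidable

/-- A flow network: a finite directed graph with node set `V`, edge set `E ⊆ V × V`,
source `s`, terminal `t` with `s ≠ t`, an artificial edge `(t, s) ∈ E`, nonnegative
capacities `U` and nonnegative unit routing costs `p` with `p (t, s) = 0`. -/
structure FlowNetwork where
  V : Type
  fintypeV : Fintype V
  E : Finset (V × V)
  s : V
  t : V
  s_ne_t : s ≠ t
  ts_mem : (t, s) ∈ E
  U : V × V → ℝ
  U_nonneg : ∀ e, 0 ≤ U e
  p : V × V → ℝ
  p_nonneg : ∀ e, 0 ≤ p e
  p_ts : p (t, s) = 0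

attribute [instance] FlowNetwork.fintypeV

namespace FlowNetwork

variable (N : FlowNetwork)

/-- Sum of a function over the edges entering node `v`. -/
noncomputable def inSum (y : N.V × N.V → ℝ) (v : N.V) : ℝ :=
  ∑ e ∈ N.E.filter (fun e => e.2 = v), y e

/-- Sum of a function over the edges leaving node `v`. -/
noncomputable def outSum (y : N.V × N.V → ℝ) (v : N.V) : ℝ :=
  ∑ e ∈ N.E.filter (fun e => e.1 = v), y e

/-- A feasible flow: nonnegative, conserved at every node other than `s`,
and capacity-feasible on every edge other than the artificial edge `(t, s)`. -/
def Feasible (x : N.V × N.V → ℝ) : Prop :=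
  (∀ e, 0 ≤ x e) ∧
  (∀ v, v ≠ N.s → N.inSum x v = N.outSum x v) ∧
  (∀ e ∈ N.E, e ≠ (N.t, N.s) → x e ≤ N.U e)

/-- `Λ_u`: the set of edges lying on some simple directed path from `u` to `t`. -/
def lambdaSet (u : N.V) : Set (N.V × N.V) :=
  {e | ∃ l : List N.V, l.Chain' (fun a b => (a, b) ∈ N.E) ∧ l.Nodup ∧
    l.head? = some u ∧ l.getLast? = some N.t ∧ e ∈ l.zip l.tail}

/-- `ρ_e`: the set of edges `e' = (u, v) ∈ E` such that `e ∈ Λ_u`. -/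
def rho (e : N.V × N.V) : Set (N.V × N.V) :=
  {e' | e' ∈ N.E ∧ e ∈ N.lambdaSet e'.1}

/-!
Since `μ` is binary, the bound `∑_{e' ∈ ρ_e} μ_{e'}` on `π_e` is either `0` or at least `1`. In the
first case it forces `π_e = 0`. In the second it leaves `π_e` free in `[0, 1]`, and as the convex
combination `(1 - π_e) x̄_e + π_e U_e` is at most the larger of `x̄_e` and `U_e`, `π_e` may be moved
to an endpoint. Each `π_e` is thus rounded on its own, leaving `y`, `z` and hence the objective
untouched.
-/

/-- The values of the objective of the adversary's inner problem for the flow `xb` and the attack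
`μ`, attained at feasible `(y, z, π)` whose entries `π e` lie in `P`. The problem with binary `π` is
the case `P = {0, 1}`, its relaxation the case `P = [0, 1]`. -/
def objectiveValues (xb μ : N.V × N.V → ℝ) (P : Set ℝ) : Set ℝ :=
  {r : ℝ | ∃ y z π : N.V × N.V → ℝ,
    (∀ e ∈ N.E, 0 ≤ y e) ∧ (∀ e ∈ N.E, 0 ≤ z e) ∧
    (∀ v, v ≠ N.s → N.outSum y v ≤ N.inSum y v) ∧
    (∀ e ∈ N.E, y e ≤ (1 - μ e) * N.U e) ∧
    (∀ e ∈ N.E, y e ≤ (1 - π e) * xb e + π e * N.U e) ∧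
    (∀ e ∈ N.E, π e ≤ ∑ e' ∈ N.E.filter (fun e' => e' ∈ N.rho e), μ e') ∧
    (∀ e ∈ N.E, y e - xb e ≤ z e) ∧
    (∀ e ∈ N.E, π e ∈ P) ∧
    r = y (N.t, N.s) - ∑ e ∈ N.E, N.p e * z e}

theorem objectiveValues_mono (xb μ : N.V × N.V → ℝ) {P Q : Set ℝ} (hPQ : P ⊆ Q) :
    N.objectiveValues xb μ P ⊆ N.objectiveValues xb μ Q := by
  rintro r ⟨y, z, π, hy, hz, hflow, hcap, hmix, hbound, hexcess, hπ, hr⟩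
  exact ⟨y, z, π, hy, hz, hflow, hcap, hmix, hbound, hexcess, fun e he => hPQ (hπ e he), hr⟩

theorem sum_eq_zero_or_one_le_sum {ι R : Type*} [AddCommMonoidWithOne R] [PartialOrder R]
    [IsOrderedAddMonoid R] [ZeroLEOneClass R] {s : Finset ι} {f : ι → R}
    (hf : ∀ i ∈ s, f i = 0 ∨ 1 ≤ f i) : ∑ i ∈ s, f i = 0 ∨ 1 ≤ ∑ i ∈ s, f i := by
  by_cases hzero : ∀ i ∈ s, f i = 0
  · exact .inl (Finset.sum_eq_zero hzero)
  · push Not at hzero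
    obtain ⟨i, hi, hne⟩ := hzero
    have hnonneg : ∀ j ∈ s, 0 ≤ f j := fun j hj => (hf j hj).elim ge_of_eq zero_le_one.trans
    exact .inr (((hf i hi).resolve_left hne).trans (Finset.single_le_sum hnonneg hi))

theorem exists_binary_of_le_convex_combination {R : Type*} [Ring R] [LinearOrder R]
    [IsOrderedRing R] {a b c w y : R} (hc : c = 0 ∨ 1 ≤ c) (hw : w ∈ Set.Icc 0 1) (hwc : w ≤ c)
    (hy : y ≤ (1 - w) * a + w * b) :
    ∃ q ∈ ({0, 1} : Set R), q ≤ c ∧ y ≤ (1 - q) * a + q * b := by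
  rcases hc with rfl | hc
  · exact ⟨w, .inl (hwc.antisymm hw.1), hwc, hy⟩
  · have hmax : y ≤ max a b :=
      hy.trans (Convex.combo_le_max a b (sub_nonneg.2 hw.2) hw.1 (sub_add_cancel 1 w))
    rcases le_max_iff.1 hmax with hya | hyb
    · exact ⟨0, by simp, zero_le_one.trans hc, by simpa using hya⟩
    · exact ⟨1, by simp, hc, by simpa using hyb⟩

theorem objectiveValues_Icc_subset (xb : N.V × N.V → ℝ) {μ : N.V × N.V → ℝ}
    (hμ : ∀ e ∈ N.E, μ e = 0 ∨ μ e = 1) :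
    N.objectiveValues xb μ (Set.Icc 0 1) ⊆ N.objectiveValues xb μ {0, 1} := by
  rintro r ⟨y, z, π, hy, hz, hflow, hcap, hmix, hbound, hexcess, hπ, hr⟩
  have hround : ∀ e ∈ N.E, ∃ q ∈ ({0, 1} : Set ℝ),
      q ≤ ∑ e' ∈ N.E.filter (fun e' => e' ∈ N.rho e), μ e' ∧
        y e ≤ (1 - q) * xb e + q * N.U e := fun e he =>
    exists_binary_of_le_convex_combination
      (sum_eq_zero_or_one_le_sum fun e' he' =>
        (hμ e' (Finset.mem_filter.1 he').1).imp_right ge_of_eq)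
      (hπ e he) (hbound e he) (hmix e he)
  choose! π' hbinary hbound' hmix' using hround
  exact ⟨y, z, π', hy, hz, hflow, hcap, hmix', hbound', hexcess, hbinary, hr⟩

theorem binary_pi_relaxation_general (xb : N.V × N.V → ℝ) {μ : N.V × N.V → ℝ}
    (hμ : ∀ e ∈ N.E, μ e = 0 ∨ μ e = 1) :
    N.objectiveValues xb μ {0, 1} = N.objectiveValues xb μ (Set.Icc 0 1) :=
  (N.objectiveValues_mono xb μ (Set.pair_subset (by simp) (by simp))).antisymm
    (N.objectiveValues_Icc_subset xb hμ)

/-- The adversary's inner LP: the supremum of the objective over feasible `(y, z, π)`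
with `π` binary equals the supremum with `π` relaxed to `[0, 1]`. -/
theorem binary_pi_relaxation (N : FlowNetwork) (xb : N.V × N.V → ℝ)
    (hxb : N.Feasible xb) (Γ : ℕ) (μ : N.V × N.V → ℝ)
    (hμ01 : ∀ e, μ e = 0 ∨ μ e = 1) (hμts : μ (N.t, N.s) = 0)
    (hμbud : ∑ e ∈ N.E, μ e ≤ (Γ : ℝ)) :
    sSup {r : ℝ | ∃ y z π : N.V × N.V → ℝ,
      (∀ e ∈ N.E, 0 ≤ y e) ∧ (∀ e ∈ N.E, 0 ≤ z e) ∧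
      (∀ v, v ≠ N.s → N.outSum y v ≤ N.inSum y v) ∧
      (∀ e ∈ N.E, y e ≤ (1 - μ e) * N.U e) ∧
      (∀ e ∈ N.E, y e ≤ (1 - π e) * xb e + π e * N.U e) ∧
      (∀ e ∈ N.E, π e ≤ ∑ e' ∈ N.E.filter (fun e' => e' ∈ N.rho e), μ e') ∧
      (∀ e ∈ N.E, y e - xb e ≤ z e) ∧
      (∀ e ∈ N.E, π e = 0 ∨ π e = 1) ∧
      r = y (N.t, N.s) - ∑ e ∈ N.E, N.p e * z e} =
    sSup {r : ℝ | ∃ y z π : N.V × N.V → ℝ,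
      (∀ e ∈ N.E, 0 ≤ y e) ∧ (∀ e ∈ N.E, 0 ≤ z e) ∧
      (∀ v, v ≠ N.s → N.outSum y v ≤ N.inSum y v) ∧
      (∀ e ∈ N.E, y e ≤ (1 - μ e) * N.U e) ∧
      (∀ e ∈ N.E, y e ≤ (1 - π e) * xb e + π e * N.U e) ∧
      (∀ e ∈ N.E, π e ≤ ∑ e' ∈ N.E.filter (fun e' => e' ∈ N.rho e), μ e') ∧
      (∀ e ∈ N.E, y e - xb e ≤ z e) ∧
      (∀ e ∈ N.E, 0 ≤ π e ∧ π e ≤ 1) ∧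
      r = y (N.t, N.s) - ∑ e ∈ N.E, N.p e * z e} := by
  exact congrArg sSup (N.binary_pi_relaxation_general xb fun e _ => hμ01 e)

end FlowNetwork
end

section
/- The adversary's decision problem is not sub-modular: there exist a flow network with p_e = 0 for every e, a feasible flow x̄ ∈ X, attack sets A ⊆ B ⊆ E \ {e_ts}, and an edge e* ∈ E \ (B ∪ {e_ts}) such that the marginal gain of adding e* to A is strictly smaller than the marginal gain of adding e* to B, i.e. g(A ∪ {e*}) − g(A) < g(B ∪ {e*}) − g(B). -/
/-!
The return edge `(t, s)` lies on no simple path to `t`, so its capacity stays at `xb (t, s)` after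
every attack. Hence without routing costs an attack gains nothing as long as some admissible flow
restores this value, and it gains everything when it removes all edges into `t`.

Route all flow along an edge `s → t` that has an unused detour `s → 1 → t` as backup. Attacking
`1 → t` alone is harmless because the detour is unused; attacking `s → t` alone is harmless because
the flow can be moved to the detour, whose edges are reachable from `s` and so become available up
to their full capacity. Attacking both stops the flow.
-/

attribute [local instance] Classical.propDecidable

namespace FlowNetwork

variable (N : FlowNetwork)

/-- The indicator `π_e` induced by an attack set `A`: `1` if some edge of `A` lies in
`ρ_e`, and `0` otherwise. -/
noncomputable def piOf (A : Finset (N.V × N.V)) (e : N.V × N.V) : ℝ :=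
  if ∃ e' ∈ A, e' ∈ N.rho e then 1 else 0

/-- The set of objective values of feasible points of the LP defining `G(A)` for a
given feasible flow `xb` and attack set `A`. -/
def GSet (xb : N.V × N.V → ℝ) (A : Finset (N.V × N.V)) : Set ℝ :=
  {r | ∃ y z : N.V × N.V → ℝ,
    (∀ e ∈ N.E, 0 ≤ y e) ∧ (∀ e ∈ N.E, 0 ≤ z e) ∧
    (∀ v, v ≠ N.s → N.outSum y v ≤ N.inSum y v) ∧
    (∀ e ∈ A, y e ≤ 0) ∧
    (∀ e ∈ N.E, e ∉ A → y e ≤ (1 - N.piOf A e) * xb e + N.piOf A e * N.U e) ∧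
    (∀ e ∈ N.E, y e - xb e ≤ z e) ∧
    r = y (N.t, N.s) - ∑ e ∈ N.E, N.p e * z e}

/-- `G(A)`: the optimal adaptive value after the attack set `A`. -/
noncomputable def GVal (xb : N.V × N.V → ℝ) (A : Finset (N.V × N.V)) : ℝ :=
  sSup (N.GSet xb A)

/-- `g(A) = G(∅) − G(A)`: the adversary's gain from the attack set `A`. -/
noncomputable def gain (xb : N.V × N.V → ℝ) (A : Finset (N.V × N.V)) : ℝ :=
  N.GVal xb ∅ - N.GVal xb A

/-- A flow `y` available after the attack `A` on `xb`: it satisfies the constraints that define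
`G(A)`. The surplus variables `z` are left out: since `p ≥ 0`, their best choice is
`z = max 0 (y - xb)`. -/
structure IsAdaptiveFlow (xb : N.V × N.V → ℝ) (A : Finset (N.V × N.V)) (y : N.V × N.V → ℝ) :
    Prop where
  nonneg : ∀ e ∈ N.E, 0 ≤ y e
  outSum_le_inSum : ∀ v, v ≠ N.s → N.outSum y v ≤ N.inSum y v
  nonpos_of_mem : ∀ e ∈ A, y e ≤ 0
  le_capacity : ∀ e ∈ N.E, e ∉ A → y e ≤ (1 - N.piOf A e) * xb e + N.piOf A e * N.U e

section General

variable {N} {xb y : N.V × N.V → ℝ} {A : Finset (N.V × N.V)} {e e' : N.V × N.V} {u : N.V} {r c : ℝ}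

theorem piOf_eq_zero_or_one : N.piOf A e = 0 ∨ N.piOf A e = 1 := by
  unfold piOf
  split_ifs <;> simp

theorem piOf_eq_one (he' : e' ∈ A) (hρ : e' ∈ N.rho e) : N.piOf A e = 1 :=
  if_pos ⟨e', he', hρ⟩

theorem fst_ne_t_of_mem_lambdaSet (he : e ∈ N.lambdaSet u) : e.1 ≠ N.t := by
  obtain ⟨l, -, hnodup, -, hlast, hmem⟩ := he
  obtain ⟨i, hi, rfl⟩ := List.mem_iff_getElem.1 hmem
  have hi' : i < l.length - 1 := by
    simp only [List.length_zip, List.length_tail] at hi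
    lia
  have hlast' : l[l.length - 1] = N.t := by
    rw [List.getLast?_eq_getElem?, List.getElem?_eq_some_iff] at hlast
    exact hlast.2
  intro ht
  rw [List.getElem_zip, ← hlast', hnodup.getElem_inj_iff] at ht
  lia

theorem piOf_ts : N.piOf A (N.t, N.s) = 0 :=
  if_neg fun ⟨_, _, hρ⟩ => fst_ne_t_of_mem_lambdaSet hρ.2 rfl

theorem exists_isAdaptiveFlow_of_mem_GSet (hr : r ∈ N.GSet xb A) :
    ∃ y, N.IsAdaptiveFlow xb A y ∧ r ≤ y (N.t, N.s) := by
  obtain ⟨y, z, hy, hz, hbal, hA, hcap, -, rfl⟩ := hr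
  exact ⟨y, ⟨hy, hbal, hA, hcap⟩, sub_le_self _ <|
    Finset.sum_nonneg fun e he => mul_nonneg (N.p_nonneg e) (hz e he)⟩

theorem GVal_le (hc : 0 ≤ c) (h : ∀ y, N.IsAdaptiveFlow xb A y → y (N.t, N.s) ≤ c) :
    N.GVal xb A ≤ c :=
  Real.sSup_le (fun _ hr =>
    have ⟨y, hy, hle⟩ := exists_isAdaptiveFlow_of_mem_GSet hr
    hle.trans (h y hy)) hc

theorem IsAdaptiveFlow.apply_ts_le (hy : N.IsAdaptiveFlow xb A y) (hxb : 0 ≤ xb (N.t, N.s)) :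
    y (N.t, N.s) ≤ xb (N.t, N.s) := by
  by_cases hA : (N.t, N.s) ∈ A
  · exact (hy.nonpos_of_mem _ hA).trans hxb
  · simpa [piOf_ts] using hy.le_capacity _ N.ts_mem hA

theorem GVal_le_apply_ts (hxb : 0 ≤ xb (N.t, N.s)) : N.GVal xb A ≤ xb (N.t, N.s) :=
  GVal_le hxb fun _ hy => hy.apply_ts_le hxb

theorem bddAbove_GSet (hxb : 0 ≤ xb (N.t, N.s)) : BddAbove (N.GSet xb A) :=
  ⟨xb (N.t, N.s), fun _ hr =>
    have ⟨_, hy, hle⟩ := exists_isAdaptiveFlow_of_mem_GSet hr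
    hle.trans (hy.apply_ts_le hxb)⟩

theorem IsAdaptiveFlow.sub_cost_le_GVal (hy : N.IsAdaptiveFlow xb A y)
    (hxb : 0 ≤ xb (N.t, N.s)) :
    y (N.t, N.s) - ∑ e ∈ N.E, N.p e * max 0 (y e - xb e) ≤ N.GVal xb A :=
  le_csSup (bddAbove_GSet hxb)
    ⟨y, fun e => max 0 (y e - xb e), hy.nonneg, fun _ _ => le_max_left _ _, hy.outSum_le_inSum,
      hy.nonpos_of_mem, hy.le_capacity, fun _ _ => le_max_right _ _, rfl⟩

theorem Feasible.isAdaptiveFlow (hxb : N.Feasible xb) (hA : ∀ e ∈ A, xb e = 0) :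
    N.IsAdaptiveFlow xb A xb where
  nonneg e _ := hxb.1 e
  outSum_le_inSum v hv := (hxb.2.1 v hv).ge
  nonpos_of_mem e he := (hA e he).le
  le_capacity e he _ := by
    by_cases hts : e = (N.t, N.s)
    · simp [hts, piOf_ts]
    · rcases piOf_eq_zero_or_one (A := A) (e := e) with hπ | hπ <;> simp [hπ, hxb.2.2 e he hts]

theorem Feasible.GVal_eq_of_unused (hxb : N.Feasible xb) (hA : ∀ e ∈ A, xb e = 0) :
    N.GVal xb A = xb (N.t, N.s) :=
  (GVal_le_apply_ts (hxb.1 _)).antisymm <| by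
    simpa using (hxb.isAdaptiveFlow hA).sub_cost_le_GVal (hxb.1 _)

theorem Feasible.gain_eq_sub (hxb : N.Feasible xb) : N.gain xb A = xb (N.t, N.s) - N.GVal xb A := by
  rw [gain, hxb.GVal_eq_of_unused (by simp)]

theorem Feasible.gain_eq_zero_of_unused (hxb : N.Feasible xb) (hA : ∀ e ∈ A, xb e = 0) :
    N.gain xb A = 0 := by
  rw [hxb.gain_eq_sub, hxb.GVal_eq_of_unused hA, sub_self]

theorem IsAdaptiveFlow.gain_eq_zero (hy : N.IsAdaptiveFlow xb A y) (hxb : N.Feasible xb)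
    (hp : ∀ e ∈ N.E, N.p e = 0) (hts : y (N.t, N.s) = xb (N.t, N.s)) : N.gain xb A = 0 := by
  have hcost : ∑ e ∈ N.E, N.p e * max 0 (y e - xb e) = 0 :=
    Finset.sum_eq_zero fun e he => by rw [hp e he, zero_mul]
  have hle : xb (N.t, N.s) ≤ N.GVal xb A := by
    simpa [hcost, hts] using hy.sub_cost_le_GVal (hxb.1 _)
  rw [hxb.gain_eq_sub, (GVal_le_apply_ts (hxb.1 _)).antisymm hle, sub_self]

theorem IsAdaptiveFlow.apply_ts_nonpos_of_forall_into_t_mem (hy : N.IsAdaptiveFlow xb A y)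
    (hA : ∀ e ∈ N.E, e.2 = N.t → e ∈ A) : y (N.t, N.s) ≤ 0 :=
  calc y (N.t, N.s) ≤ N.outSum y N.t :=
        Finset.single_le_sum (fun e he => hy.nonneg e (Finset.mem_filter.1 he).1)
          (Finset.mem_filter.2 ⟨N.ts_mem, rfl⟩)
    _ ≤ N.inSum y N.t := hy.outSum_le_inSum _ N.s_ne_t.symm
    _ ≤ 0 := Finset.sum_nonpos fun e he =>
        have ⟨heE, het⟩ := Finset.mem_filter.1 he
        hy.nonpos_of_mem e (hA e heE het)

theorem Feasible.apply_ts_le_gain_of_forall_into_t_mem (hxb : N.Feasible xb)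
    (hA : ∀ e ∈ N.E, e.2 = N.t → e ∈ A) : xb (N.t, N.s) ≤ N.gain xb A := by
  have hG : N.GVal xb A ≤ 0 :=
    GVal_le le_rfl fun _ hy => hy.apply_ts_nonpos_of_forall_into_t_mem hA
  linarith [hxb.gain_eq_sub (A := A)]

end General

section Detour

/-- The counterexample network: a direct edge from `s = 0` to `t = 2` and a detour through `1`,
with unit capacities and no routing costs. It is reducible so that `Fin 3` numerals denote its
nodes. -/
noncomputable abbrev detourNetwork : FlowNetwork where
  V := Fin 3
  fintypeV := inferInstance
  E := {(0, 1), (1, 2), (0, 2), (2, 0)}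
  s := 0
  t := 2
  s_ne_t := by decide
  ts_mem := by simp
  U _ := 1
  U_nonneg _ := zero_le_one
  p _ := 0
  p_nonneg _ := le_rfl
  p_ts := rfl

/-- The flow that sends one unit along the direct edge of `detourNetwork`. -/
noncomputable def directFlow (e : Fin 3 × Fin 3) : ℝ :=
  if e = (0, 2) ∨ e = (2, 0) then 1 else 0

/-- The flow that sends one unit along the detour of `detourNetwork`. -/
noncomputable def detourFlow (e : Fin 3 × Fin 3) : ℝ :=
  if e = (0, 2) then 0 else 1

theorem inSum_eq_outSum_detourNetwork {y : Fin 3 × Fin 3 → ℝ} (h₁ : y (0, 1) = y (1, 2))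
    (h₂ : y (1, 2) + y (0, 2) = y (2, 0)) {v : Fin 3} (hv : v ≠ 0) :
    detourNetwork.inSum y v = detourNetwork.outSum y v := by
  fin_cases v
  · exact absurd rfl hv
  · simpa [inSum, outSum, Finset.sum_filter] using h₁
  · simpa [inSum, outSum, Finset.sum_filter] using h₂

theorem feasible_directFlow : detourNetwork.Feasible directFlow := by
  refine ⟨fun e => ?_, fun v hv => ?_, fun e _ _ => ?_⟩
  · unfold directFlow
    split_ifs <;> simp
  · exact inSum_eq_outSum_detourNetwork (by simp [directFlow]) (by simp [directFlow]) hv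
  · unfold directFlow
    split_ifs <;> simp

theorem piOf_detourNetwork_eq_one {e : Fin 3 × Fin 3} (he : e = (0, 1) ∨ e = (1, 2)) :
    detourNetwork.piOf {(0, 2)} e = 1 := by
  refine piOf_eq_one (Finset.mem_singleton_self _) ⟨by simp, ?_⟩
  have hpath : List.IsChain (fun a b => (a, b) ∈ detourNetwork.E) [0, 1, 2] := by simp
  exact ⟨[0, 1, 2], hpath, by simp, rfl, rfl, by simpa using he⟩

theorem isAdaptiveFlow_detourFlow :
    detourNetwork.IsAdaptiveFlow directFlow {(0, 2)} detourFlow where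
  nonneg e _ := by
    unfold detourFlow
    split_ifs <;> simp
  outSum_le_inSum v hv :=
    (inSum_eq_outSum_detourNetwork (by simp [detourFlow]) (by simp [detourFlow]) hv).ge
  nonpos_of_mem e he := by simp [Finset.mem_singleton.1 he, detourFlow]
  le_capacity e he hA := by
    have hcases : (e = (0, 1) ∨ e = (1, 2)) ∨ e = (2, 0) := by
      simp_all [or_assoc]
    rcases hcases with hdetour | rfl
    · rw [piOf_detourNetwork_eq_one hdetour]
      rcases hdetour with rfl | rfl <;> simp [detourFlow]
    · simp [detourFlow, directFlow, piOf_ts (N := detourNetwork)]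

end Detour

/-- The adversary's decision problem is not sub-modular. -/
theorem adversary_not_submodular :
    ∃ (N : FlowNetwork) (xb : N.V × N.V → ℝ) (A B : Finset (N.V × N.V))
      (estar : N.V × N.V),
      (∀ e, N.p e = 0) ∧ N.Feasible xb ∧
      A ⊆ B ∧ B ⊆ N.E ∧ (N.t, N.s) ∉ B ∧
      estar ∈ N.E ∧ estar ∉ B ∧ estar ≠ (N.t, N.s) ∧
      N.gain xb (insert estar A) - N.gain xb A <
        N.gain xb (insert estar B) - N.gain xb B := by
  refine ⟨detourNetwork, directFlow, ∅, {(0, 2)}, (1, 2), fun _ => rfl, feasible_directFlow,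
    by simp, by simp, by simp, by simp, by simp, by simp, ?_⟩
  have hdirect : detourNetwork.gain directFlow {(0, 2)} = 0 :=
    isAdaptiveFlow_detourFlow.gain_eq_zero feasible_directFlow (by simp)
      (by simp [directFlow, detourFlow])
  have hpos : 0 < directFlow (2, 0) := by simp [directFlow]
  rw [hdirect, feasible_directFlow.gain_eq_zero_of_unused (A := ∅) (by simp),
    feasible_directFlow.gain_eq_zero_of_unused (by simp [directFlow]), sub_zero, sub_zero]
  exact hpos.trans_le <| feasible_directFlow.apply_ts_le_gain_of_forall_into_t_mem (by simp)

end FlowNetwork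
end

section
/- For every flow network, every feasible flow x ∈ X, and every attack μ that attacks exactly one edge e* ≠ e_ts (μ_{e*} = 1 and μ_e = 0 for all e ≠ e*), the loss in the administrator's objective is bounded by the flow initially assigned to the attacked edge: M(x, μ) ≥ M(x, 0) − x_{e*}, where 0 denotes the attack with no attacked edges. -/
attribute [local instance] Classical.propDecidable

namespace FlowNetwork

variable (N : FlowNetwork)

/-- `σ_μ`: the set of tails of the edges attacked by `μ`. -/
def sigmaSet (μ : N.V × N.V → ℝ) : Set N.V :=
  {u | ∃ w, (u, w) ∈ N.E ∧ μ (u, w) = 1}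

/-- `Λ_{σ_μ}`: the union of `Λ_u` over all tails `u` of attacked edges. -/
def lambdaSigma (μ : N.V × N.V → ℝ) : Set (N.V × N.V) :=
  ⋃ u ∈ N.sigmaSet μ, N.lambdaSet u

/-- The set of objective values of feasible points of the LP defining `M(x, μ)`. -/
def MSet (x μ : N.V × N.V → ℝ) : Set ℝ :=
  {r | ∃ y z : N.V × N.V → ℝ,
    (∀ e ∈ N.E, 0 ≤ y e) ∧ (∀ e ∈ N.E, 0 ≤ z e) ∧
    (∀ v, v ≠ N.s → N.outSum y v ≤ N.inSum y v) ∧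
    (∀ e ∈ N.E, e ∉ N.lambdaSigma μ → y e ≤ x e) ∧
    (∀ e ∈ N.E, e ∈ N.lambdaSigma μ → y e ≤ (1 - μ e) * N.U e) ∧
    (∀ e ∈ N.E, e ∈ N.lambdaSigma μ → y e - x e ≤ z e) ∧
    r = y (N.t, N.s) - ∑ e ∈ N.E, N.p e * z e - ∑ e ∈ N.E, N.p e * x e}

/-- `M(x, μ)`: the adaptive value of the flow `x` under the attack `μ`. -/
noncomputable def MVal (x μ : N.V × N.V → ℝ) : ℝ := sSup (N.MSet x μ)

/-
Let every node `v ≠ s` forward the fraction `g v` of its outflow in `x`, shared among its outgoing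
edges in proportion to `x`, and let every edge `e` drop the fraction `μ e` of its load. A choice of
`g` under which each node forwards exactly what reaches it is a fixed point of a monotone operator
on `[0, 1] ^ V`. Summing the balance over all nodes shows that what fails to come back to `s` is
what the edges drop, at most `∑ e, μ e * x e`; in particular the edge `(t, s)` loses no more than
that. The resulting flow is admissible after the attack without rerouting (`z = 0`), while before
the attack `y (t, s) ≤ x (t, s)`, because `(t, s)` lies on no simple path to `t`.
-/

lemma exists_isFixedPt_mem_Icc {α : Type*} [ConditionallyCompleteLattice α] {a b : α}
    {f : α → α} (hab : a ≤ b) (hf : Monotone f) (ha : a ≤ f a) (hb : f b ≤ b) :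
    ∃ c ∈ Set.Icc a b, Function.IsFixedPt f c := by
  have : Fact (a ≤ b) := ⟨hab⟩
  let F : Set.Icc a b →o Set.Icc a b :=
    { toFun := fun c => ⟨f c, ha.trans (hf c.2.1), (hf c.2.2).trans hb⟩
      monotone' := fun _ _ h => hf h }
  exact ⟨F.lfp, F.lfp.2, congrArg Subtype.val F.map_lfp⟩

lemma mk_notMem_zip_tail_of_getLast? {α : Type*} {l : List α} {a : α} (hl : l.Nodup)
    (ha : l.getLast? = some a) (b : α) : (a, b) ∉ l.zip l.tail := by
  intro hab
  obtain ⟨i, hi, hiab⟩ := List.mem_iff_getElem.1 hab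
  have hi' : i + 1 < l.length := by
    simp only [List.length_zip, List.length_tail] at hi
    omega
  have hfst : l[i] = a := by
    simpa only [List.getElem_zip] using congrArg Prod.fst hiab
  have hlast : l[l.length - 1] = a := by
    rw [List.getLast?_eq_getElem?] at ha
    exact (List.getElem?_eq_some_iff.1 ha).2
  have : i = l.length - 1 := hl.getElem_inj_iff.1 (hfst.trans hlast.symm)
  omega

section

variable {N} {x y w μ : N.V × N.V → ℝ} {g : N.V → ℝ}

lemma fst_ne_t_of_mem_lambdaSigma {e : N.V × N.V} (he : e ∈ N.lambdaSigma μ) : e.1 ≠ N.t := by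
  simp only [lambdaSigma, Set.mem_iUnion] at he
  obtain ⟨u, -, l, -, hnodup, -, hlast, hel⟩ := he
  intro het
  exact mk_notMem_zip_tail_of_getLast? hnodup hlast e.2 (het ▸ hel)

lemma ts_notMem_lambdaSigma : (N.t, N.s) ∉ N.lambdaSigma μ :=
  fun h => fst_ne_t_of_mem_lambdaSigma h rfl

lemma sum_inSum (y : N.V × N.V → ℝ) : ∑ v, N.inSum y v = ∑ e ∈ N.E, y e :=
  Finset.sum_fiberwise _ _ _

lemma sum_outSum (y : N.V × N.V → ℝ) : ∑ v, N.outSum y v = ∑ e ∈ N.E, y e :=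
  Finset.sum_fiberwise _ _ _

lemma inSum_mono (h : ∀ e ∈ N.E, y e ≤ w e) (v : N.V) : N.inSum y v ≤ N.inSum w v :=
  Finset.sum_le_sum fun e he => h e (Finset.mem_filter.1 he).1

lemma outSum_mono (h : ∀ e ∈ N.E, y e ≤ w e) (v : N.V) : N.outSum y v ≤ N.outSum w v :=
  Finset.sum_le_sum fun e he => h e (Finset.mem_filter.1 he).1

lemma inSum_nonneg (h : ∀ e ∈ N.E, 0 ≤ y e) (v : N.V) : 0 ≤ N.inSum y v :=
  Finset.sum_nonneg fun e he => h e (Finset.mem_filter.1 he).1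

lemma outSum_nonneg (h : ∀ e ∈ N.E, 0 ≤ y e) (v : N.V) : 0 ≤ N.outSum y v :=
  Finset.sum_nonneg fun e he => h e (Finset.mem_filter.1 he).1

lemma outSum_fst_mul (g : N.V → ℝ) (x : N.V × N.V → ℝ) (v : N.V) :
    N.outSum (fun e => g e.1 * x e) v = g v * N.outSum x v := by
  rw [outSum, outSum, Finset.mul_sum]
  refine Finset.sum_congr rfl fun e he => ?_
  rw [(Finset.mem_filter.1 he).2]

lemma sub_le_inSum_sub_inSum (h : ∀ e ∈ N.E, y e ≤ x e) {e : N.V × N.V} (he : e ∈ N.E) :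
    x e - y e ≤ N.inSum x e.2 - N.inSum y e.2 := by
  rw [inSum, inSum, ← Finset.sum_sub_distrib]
  exact Finset.single_le_sum (f := fun e => x e - y e)
    (fun e' he' => sub_nonneg.2 (h e' (Finset.mem_filter.1 he').1))
    (Finset.mem_filter.2 ⟨he, rfl⟩)

lemma outSum_s_sub_inSum_s (h : ∀ v, v ≠ N.s → N.inSum y v = N.outSum w v) :
    N.outSum w N.s - N.inSum y N.s = ∑ e ∈ N.E, w e - ∑ e ∈ N.E, y e := by
  rw [← sum_outSum w, ← sum_inSum y, ← Finset.sum_sub_distrib]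
  symm
  refine Fintype.sum_eq_single N.s fun v hv => ?_
  rw [h v hv, sub_self]

lemma inSum_s_eq_outSum_s (h : ∀ v, v ≠ N.s → N.inSum x v = N.outSum x v) :
    N.inSum x N.s = N.outSum x N.s := by
  have := outSum_s_sub_inSum_s h
  linarith

variable (N) in
/-- A preflow in the sense of the linear program defining `M`: nonnegative on the edges, and no
node other than `s` sends out more than it receives. Capacities are not part of the notion. -/
structure IsPreflow (y : N.V × N.V → ℝ) : Prop where
  nonneg : ∀ e ∈ N.E, 0 ≤ y e
  outSum_le_inSum : ∀ v, v ≠ N.s → N.outSum y v ≤ N.inSum y v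

variable (N) in
/-- Proportional forwarding: the amounts delivered along the edges when each node `v` sends out the
fraction `g v` of its outflow in `x` and each edge `e` drops the fraction `μ e` of its load. -/
def forward (x μ : N.V × N.V → ℝ) (g : N.V → ℝ) : N.V × N.V → ℝ :=
  fun e => (1 - μ e) * (g e.1 * x e)

variable (N) in
/-- The fraction of its outflow in `x` that each node receives when the nodes forward according to
`g`; the source always counts as fully supplied. A node with no outflow in `x` gets `0`. -/
noncomputable def receivedFraction (x μ : N.V × N.V → ℝ) (g : N.V → ℝ) : N.V → ℝ :=
  fun v => if v = N.s then 1 else N.inSum (N.forward x μ g) v / N.outSum x v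

lemma forward_nonneg (hx : ∀ e ∈ N.E, 0 ≤ x e) (hμ : ∀ e ∈ N.E, μ e ≤ 1) (hg : 0 ≤ g) :
    ∀ e ∈ N.E, 0 ≤ N.forward x μ g e :=
  fun e he => mul_nonneg (sub_nonneg.2 (hμ e he)) (mul_nonneg (hg e.1) (hx e he))

lemma forward_mono (hx : ∀ e ∈ N.E, 0 ≤ x e) (hμ : ∀ e ∈ N.E, μ e ≤ 1) {g₁ g₂ : N.V → ℝ}
    (hg : g₁ ≤ g₂) : ∀ e ∈ N.E, N.forward x μ g₁ e ≤ N.forward x μ g₂ e :=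
  fun e he => mul_le_mul_of_nonneg_left (mul_le_mul_of_nonneg_right (hg e.1) (hx e he))
    (sub_nonneg.2 (hμ e he))

lemma forward_le_mul (hx : ∀ e ∈ N.E, 0 ≤ x e) (hμ : ∀ e ∈ N.E, μ e ≤ 1) (hg : g ≤ 1) :
    ∀ e ∈ N.E, N.forward x μ g e ≤ (1 - μ e) * x e :=
  fun e he => mul_le_mul_of_nonneg_left (mul_le_of_le_one_left (hx e he) (hg e.1))
    (sub_nonneg.2 (hμ e he))

lemma forward_le (hx : ∀ e ∈ N.E, 0 ≤ x e) (hμ : ∀ e ∈ N.E, μ e ∈ Set.Icc 0 1) (hg : g ≤ 1) :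
    ∀ e ∈ N.E, N.forward x μ g e ≤ x e :=
  fun e he => (forward_le_mul hx (fun e he => (hμ e he).2) hg e he).trans
    (mul_le_of_le_one_left (hx e he) (sub_le_self 1 (hμ e he).1))

lemma receivedFraction_mono (hx : ∀ e ∈ N.E, 0 ≤ x e) (hμ : ∀ e ∈ N.E, μ e ≤ 1) :
    Monotone (N.receivedFraction x μ) := by
  intro g₁ g₂ hg v
  unfold receivedFraction
  split_ifs
  · exact le_rfl
  · exact div_le_div_of_nonneg_right (inSum_mono (forward_mono hx hμ hg) v) (outSum_nonneg hx v)

lemma receivedFraction_nonneg (hx : ∀ e ∈ N.E, 0 ≤ x e) (hμ : ∀ e ∈ N.E, μ e ≤ 1)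
    (hg : 0 ≤ g) : 0 ≤ N.receivedFraction x μ g := by
  intro v
  unfold receivedFraction
  split_ifs
  · exact zero_le_one
  · exact div_nonneg (inSum_nonneg (forward_nonneg hx hμ hg) v) (outSum_nonneg hx v)

lemma inSum_forward_le_outSum (hx : ∀ e ∈ N.E, 0 ≤ x e) (hμ : ∀ e ∈ N.E, μ e ∈ Set.Icc 0 1)
    (hg : g ≤ 1) {v : N.V} (hv : N.inSum x v ≤ N.outSum x v) :
    N.inSum (N.forward x μ g) v ≤ N.outSum x v :=
  (inSum_mono (forward_le hx hμ hg) v).trans hv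

lemma receivedFraction_le_one (hx : ∀ e ∈ N.E, 0 ≤ x e)
    (hio : ∀ v, v ≠ N.s → N.inSum x v ≤ N.outSum x v) (hμ : ∀ e ∈ N.E, μ e ∈ Set.Icc 0 1)
    (hg : g ≤ 1) : N.receivedFraction x μ g ≤ 1 := by
  intro v
  unfold receivedFraction
  split_ifs with hv
  · exact le_rfl
  · exact div_le_one_of_le₀ (inSum_forward_le_outSum hx hμ hg (hio v hv)) (outSum_nonneg hx v)

lemma exists_balanced_forward (hx : ∀ e ∈ N.E, 0 ≤ x e)
    (hio : ∀ v, v ≠ N.s → N.inSum x v ≤ N.outSum x v) (hμ : ∀ e ∈ N.E, μ e ∈ Set.Icc 0 1) :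
    ∃ g : N.V → ℝ, 0 ≤ g ∧ g ≤ 1 ∧ g N.s = 1 ∧
      ∀ v, v ≠ N.s → N.inSum (N.forward x μ g) v = g v * N.outSum x v := by
  have hμ1 : ∀ e ∈ N.E, μ e ≤ 1 := fun e he => (hμ e he).2
  obtain ⟨g, ⟨hg0, hg1⟩, hfix⟩ := exists_isFixedPt_mem_Icc zero_le_one
    (receivedFraction_mono hx hμ1) (receivedFraction_nonneg hx hμ1 le_rfl)
    (receivedFraction_le_one hx hio hμ le_rfl)
  refine ⟨g, hg0, hg1, (congrFun hfix N.s).symm.trans (if_pos rfl), fun v hv => ?_⟩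
  have hgv : g v = N.inSum (N.forward x μ g) v / N.outSum x v :=
    (congrFun hfix v).symm.trans (if_neg hv)
  -- Where `x` has no outflow the quotient is the junk value `0`, but then nothing arrives either.
  have hzero : N.outSum x v = 0 → N.inSum (N.forward x μ g) v = 0 := fun hout =>
    le_antisymm ((inSum_forward_le_outSum hx hμ hg1 (hio v hv)).trans_eq hout)
      (inSum_nonneg (forward_nonneg hx hμ1 hg0) v)
  rw [hgv, div_mul_cancel_of_imp hzero]

lemma isPreflow_forward (hx : ∀ e ∈ N.E, 0 ≤ x e) (hμ : ∀ e ∈ N.E, μ e ∈ Set.Icc 0 1)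
    (hg : 0 ≤ g) (hbal : ∀ v, v ≠ N.s → g v * N.outSum x v ≤ N.inSum (N.forward x μ g) v) :
    N.IsPreflow (N.forward x μ g) where
  nonneg := forward_nonneg hx (fun e he => (hμ e he).2) hg
  outSum_le_inSum v hv := by
    have hload : N.outSum (N.forward x μ g) v ≤ N.outSum (fun e => g e.1 * x e) v :=
      outSum_mono (fun e he => mul_le_of_le_one_left (mul_nonneg (hg e.1) (hx e he))
        (sub_le_self 1 (hμ e he).1)) v
    exact (hload.trans_eq (outSum_fst_mul g x v)).trans (hbal v hv)

lemma sub_forward_ts_le (hx : ∀ e ∈ N.E, 0 ≤ x e)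
    (hcons : ∀ v, v ≠ N.s → N.inSum x v = N.outSum x v) (hμ : ∀ e ∈ N.E, μ e ∈ Set.Icc 0 1)
    (hg : g ≤ 1) (hgs : g N.s = 1)
    (hbal : ∀ v, v ≠ N.s → N.inSum (N.forward x μ g) v = g v * N.outSum x v) :
    x (N.t, N.s) - N.forward x μ g (N.t, N.s) ≤ ∑ e ∈ N.E, μ e * x e := by
  let w : N.V × N.V → ℝ := fun e => g e.1 * x e
  calc x (N.t, N.s) - N.forward x μ g (N.t, N.s)
      ≤ N.inSum x N.s - N.inSum (N.forward x μ g) N.s :=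
        sub_le_inSum_sub_inSum (forward_le hx hμ hg) N.ts_mem
    _ = N.outSum w N.s - N.inSum (N.forward x μ g) N.s := by
        rw [inSum_s_eq_outSum_s hcons, outSum_fst_mul, hgs, one_mul]
    _ = ∑ e ∈ N.E, w e - ∑ e ∈ N.E, N.forward x μ g e :=
        outSum_s_sub_inSum_s fun v hv => (hbal v hv).trans (outSum_fst_mul g x v).symm
    _ = ∑ e ∈ N.E, μ e * w e := by
        rw [← Finset.sum_sub_distrib]
        exact Finset.sum_congr rfl fun e _ => by simp only [forward, w]; ring
    _ ≤ ∑ e ∈ N.E, μ e * x e :=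
        Finset.sum_le_sum fun e he => mul_le_mul_of_nonneg_left
          (mul_le_of_le_one_left (hx e he) (hg e.1)) (hμ e he).1

lemma exists_isPreflow_le_mul (hx : ∀ e ∈ N.E, 0 ≤ x e)
    (hcons : ∀ v, v ≠ N.s → N.inSum x v = N.outSum x v) (hμ : ∀ e ∈ N.E, μ e ∈ Set.Icc 0 1) :
    ∃ y, N.IsPreflow y ∧ (∀ e ∈ N.E, y e ≤ (1 - μ e) * x e) ∧
      x (N.t, N.s) - y (N.t, N.s) ≤ ∑ e ∈ N.E, μ e * x e := by
  obtain ⟨g, hg0, hg1, hgs, hbal⟩ :=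
    exists_balanced_forward hx (fun v hv => (hcons v hv).le) hμ
  exact ⟨N.forward x μ g, isPreflow_forward hx hμ hg0 fun v hv => (hbal v hv).ge,
    forward_le_mul hx (fun e he => (hμ e he).2) hg1, sub_forward_ts_le hx hcons hμ hg1 hgs hbal⟩

lemma mem_upperBounds_MSet (x μ : N.V × N.V → ℝ) :
    x (N.t, N.s) - ∑ e ∈ N.E, N.p e * x e ∈ upperBounds (N.MSet x μ) := by
  rintro _ ⟨y, z, -, hz, -, hyx, -, -, rfl⟩
  have hts : y (N.t, N.s) ≤ x (N.t, N.s) := hyx _ N.ts_mem ts_notMem_lambdaSigma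
  have hcost : 0 ≤ ∑ e ∈ N.E, N.p e * z e :=
    Finset.sum_nonneg fun e he => mul_nonneg (N.p_nonneg e) (hz e he)
  linarith

lemma IsPreflow.mem_MSet (hy : N.IsPreflow y) (hyx : ∀ e ∈ N.E, y e ≤ x e)
    (hyU : ∀ e ∈ N.E, e ≠ (N.t, N.s) → y e ≤ (1 - μ e) * N.U e) :
    y (N.t, N.s) - ∑ e ∈ N.E, N.p e * x e ∈ N.MSet x μ :=
  ⟨y, 0, hy.nonneg, fun _ _ => le_rfl, hy.outSum_le_inSum, fun e he _ => hyx e he,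
    fun e he hel => hyU e he fun hts => ts_notMem_lambdaSigma (hts ▸ hel),
    fun e he _ => sub_nonpos.2 (hyx e he),
    by simp only [Pi.zero_apply, mul_zero, Finset.sum_const_zero, sub_zero]⟩

lemma MVal_zero (hx : N.Feasible x) :
    N.MVal x (fun _ => 0) = x (N.t, N.s) - ∑ e ∈ N.E, N.p e * x e := by
  obtain ⟨hx0, hcons, hcap⟩ := hx
  have hpre : N.IsPreflow x := ⟨fun e _ => hx0 e, fun v hv => (hcons v hv).ge⟩
  refine IsGreatest.csSup_eq ⟨hpre.mem_MSet (fun _ _ => le_rfl) fun e he hts => ?_,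
    mem_upperBounds_MSet x _⟩
  simpa only [sub_zero, one_mul] using hcap e he hts

end

theorem single_attack_loss_le_flow_general (N : FlowNetwork) (x : N.V × N.V → ℝ)
    (hx : N.Feasible x) (μ : N.V × N.V → ℝ) (hμ : ∀ e ∈ N.E, μ e ∈ Set.Icc 0 1) :
    N.MVal x (fun _ => 0) - ∑ e ∈ N.E, μ e * x e ≤ N.MVal x μ := by
  obtain ⟨y, hpre, hyx, hloss⟩ := exists_isPreflow_le_mul (fun e _ => hx.1 e) hx.2.1 hμ
  have hyx' : ∀ e ∈ N.E, y e ≤ x e := fun e he =>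
    (hyx e he).trans (mul_le_of_le_one_left (hx.1 e) (sub_le_self 1 (hμ e he).1))
  have hyU : ∀ e ∈ N.E, e ≠ (N.t, N.s) → y e ≤ (1 - μ e) * N.U e := fun e he hts =>
    (hyx e he).trans (mul_le_mul_of_nonneg_left (hx.2.2 e he hts) (sub_nonneg.2 (hμ e he).2))
  have hafter : y (N.t, N.s) - ∑ e ∈ N.E, N.p e * x e ≤ N.MVal x μ :=
    le_csSup ⟨_, mem_upperBounds_MSet x μ⟩ (hpre.mem_MSet hyx' hyU)
  rw [MVal_zero hx]
  linarith

/-- Attacking a single edge `e* ≠ e_ts` loses at most the flow initially assigned to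
that edge: `M(x, μ) ≥ M(x, 0) − x_{e*}`. -/
theorem single_attack_loss_le_flow (N : FlowNetwork) (x : N.V × N.V → ℝ)
    (hx : N.Feasible x) (estar : N.V × N.V) (hmem : estar ∈ N.E)
    (hne : estar ≠ (N.t, N.s)) (μ : N.V × N.V → ℝ)
    (hμ : ∀ e, μ e = if e = estar then 1 else 0) :
    N.MVal x (fun _ => 0) - x estar ≤ N.MVal x μ := by
  have hμ01 (e) : μ e ∈ Set.Icc 0 1 := by rw [hμ]; split_ifs <;> simp
  simpa [hμ, hmem] using N.single_attack_loss_le_flow_general x hx μ fun e _ => hμ01 e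

end FlowNetwork
end

section
/- Let E be a nonempty finite set, x : E → ℝ with x_e ≥ 0 for every e, and Γ ≥ 0 a real number. Then strong LP duality holds for the adversary's inner problem of the robust flow model: max { Σ_{e∈E} x_e μ_e : μ : E → ℝ, 0 ≤ μ_e ≤ 1 for every e, Σ_{e∈E} μ_e ≤ Γ } = min { Σ_{e∈E} θ_e + ζ·Γ : θ : E → ℝ, ζ ∈ ℝ, θ_e ≥ 0 for every e, ζ ≥ 0, θ_e + ζ ≥ x_e for every e }, and both optima are attained. -/
/-!
For a price `ζ` of the budget, the cheapest feasible edge prices are `θ e = (x e - ζ)⁺`. Choose `ζ`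
to be a threshold: at most `Γ` edges carry more than `ζ`, and at least `Γ` edges carry at least `ζ`
unless `ζ = 0`. The greedy attack destroys every edge above the threshold and none below it, and
spends what it can of the remaining budget evenly on the edges at the threshold. It satisfies
complementary slackness with `(θ, ζ)`, so the two objective values agree and weak duality makes
both optimal.
-/

/-- The adversary's feasible region: `μ e` is the fraction of the edge `e` that is attacked, and `Γ`
is the attack budget. -/
def IsFractionalAttack {E K : Type*} [Fintype E] [Semiring K] [LE K] (Γ : K) (μ : E → K) : Prop :=
  (∀ e, 0 ≤ μ e ∧ μ e ≤ 1) ∧ ∑ e, μ e ≤ Γ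

/-- The feasible region of the dual of the adversary's problem for the flow `x`: `θ e` is the price
of the constraint `μ e ≤ 1` and `ζ` is the price of the budget constraint. -/
def IsDualPrice {E K : Type*} [AddZeroClass K] [LE K] (x θ : E → K) (ζ : K) : Prop :=
  (∀ e, 0 ≤ θ e) ∧ 0 ≤ ζ ∧ ∀ e, x e ≤ θ e + ζ

section Duality

variable {E K : Type*} [Fintype E] [Semiring K] {x μ θ : E → K} {ζ Γ : K}

theorem IsFractionalAttack.sum_mul_le [PartialOrder K] [IsOrderedRing K]
    (hμ : IsFractionalAttack Γ μ) (hθ : IsDualPrice x θ ζ) :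
    ∑ e, x e * μ e ≤ (∑ e, θ e) + ζ * Γ := by
  obtain ⟨hμ_mem, hμ_sum⟩ := hμ
  obtain ⟨hθ_nonneg, hζ, hx_le⟩ := hθ
  calc
    ∑ e, x e * μ e ≤ ∑ e, (θ e + ζ * μ e) := Finset.sum_le_sum fun e _ => calc
      x e * μ e ≤ (θ e + ζ) * μ e := mul_le_mul_of_nonneg_right (hx_le e) (hμ_mem e).1
      _ = θ e * μ e + ζ * μ e := add_mul ..
      _ ≤ θ e + ζ * μ e := by
        gcongr
        exact mul_le_of_le_one_right (hθ_nonneg e) (hμ_mem e).2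
    _ = (∑ e, θ e) + ζ * ∑ e, μ e := by rw [Finset.sum_add_distrib, Finset.mul_sum]
    _ ≤ (∑ e, θ e) + ζ * Γ := by gcongr

theorem sum_mul_eq_of_complementary_slackness (hθ : ∀ e, θ e * μ e = θ e)
    (hμ : ∀ e, x e * μ e = (θ e + ζ) * μ e) (hζ : ζ * ∑ e, μ e = ζ * Γ) :
    ∑ e, x e * μ e = (∑ e, θ e) + ζ * Γ := by
  simp only [hμ, add_mul, hθ, Finset.sum_add_distrib, ← Finset.mul_sum, hζ]

end Duality

theorem isDualPrice_posPart_sub {E K : Type*} [AddCommGroup K] [Lattice K]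
    [IsOrderedAddMonoid K] (x : E → K) {ζ : K} (hζ : 0 ≤ ζ) :
    IsDualPrice x (fun e => (x e - ζ)⁺) ζ :=
  ⟨fun _ => posPart_nonneg _, hζ, fun _ => sub_le_iff_le_add.mp (le_posPart _)⟩

theorem exists_threshold_card_filter {E α K : Type*} [Fintype E] [LinearOrder α] [Semiring K]
    [LinearOrder K] [IsOrderedRing K] (x : E → α) (a : α) {Γ : K} (hΓ : 0 ≤ Γ) :
    ∃ ζ, a ≤ ζ ∧ (Finset.card {e | ζ < x e} : K) ≤ Γ ∧
      (ζ = a ∨ Γ ≤ (Finset.card {e | ζ ≤ x e} : K)) := by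
  let T : Set α := insert a {ζ | ζ ∈ Set.range x ∧ Γ ≤ (Finset.card {e | ζ ≤ x e} : K)}
  have hT : T.Finite := ((Set.finite_range x).subset fun _ hζ => hζ.1).insert a
  obtain ⟨ζ, haζ, hζ⟩ := hT.exists_le_maximal (Set.mem_insert a _)
  refine ⟨ζ, haζ, ?_, hζ.prop.imp_right And.right⟩
  -- Otherwise the least value above `ζ` would be a larger element of `T`.
  by_contra! hcard
  have hne : ({e | ζ < x e} : Finset E).Nonempty :=
    Finset.nonempty_iff_ne_empty.mpr fun hempty => hcard.not_ge <| by
      rwa [hempty, Finset.card_empty, Nat.cast_zero]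
  obtain ⟨e, he, hmin⟩ := Finset.exists_min_image _ x hne
  have hsub : ({f | ζ < x f} : Finset E) ⊆ ({f | x e ≤ x f} : Finset E) := fun f hf => by
    simpa using hmin f hf
  have heT : x e ∈ T :=
    .inr ⟨⟨e, rfl⟩, hcard.le.trans (Nat.mono_cast (Finset.card_le_card hsub))⟩
  exact hζ.not_prop_of_gt (Finset.mem_filter_univ e |>.mp he) heT

section LinearOrderedField

variable {E K : Type*} [Fintype E] [Field K] [LinearOrder K] [IsStrictOrderedRing K]

theorem exists_mem_Icc_sum_eq {f g : E → K} (hfg : f ≤ g) {c : K}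
    (hc : c ∈ Set.Icc (∑ e, f e) (∑ e, g e)) : ∃ μ ∈ Set.Icc f g, ∑ e, μ e = c := by
  obtain ⟨s, t, hs, ht, hst, rfl⟩ := Icc_subset_segment hc
  exact ⟨s • f + t • g, segment_subset_Icc hfg ⟨s, t, hs, ht, hst, rfl⟩,
    by simp [Finset.sum_add_distrib, Finset.mul_sum]⟩

theorem exists_greedy_attack (x : E → K) {Γ : K} (hΓ : 0 ≤ Γ) :
    ∃ (μ : E → K) (ζ : K), IsFractionalAttack Γ μ ∧ 0 ≤ ζ ∧ (∀ e, ζ < x e → μ e = 1) ∧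
      (∀ e, x e < ζ → μ e = 0) ∧ ζ * ∑ e, μ e = ζ * Γ := by
  obtain ⟨ζ, hζ, habove, hbudget⟩ := exists_threshold_card_filter x 0 hΓ
  let lower : E → K := fun e => if ζ < x e then 1 else 0
  let upper : E → K := fun e => if ζ ≤ x e then 1 else 0
  have hle : lower ≤ upper := fun e => by grind
  have hlower : ∑ e, lower e ≤ Γ := by simpa [lower] using habove
  have hupper : ζ = 0 ∨ Γ ≤ ∑ e, upper e := by simpa [upper] using hbudget
  obtain ⟨μ, ⟨hlowerμ, hμupper⟩, hsum⟩ := exists_mem_Icc_sum_eq hle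
    (c := min Γ (∑ e, upper e))
    ⟨le_min hlower (Finset.sum_le_sum fun e _ => hle e), min_le_right _ _⟩
  have hlower_nonneg (e : E) : 0 ≤ lower e := ite_nonneg zero_le_one le_rfl
  have hupper_le_one (e : E) : upper e ≤ 1 := ite_le_one le_rfl zero_le_one
  have hμ (e : E) : 0 ≤ μ e ∧ μ e ≤ 1 :=
    ⟨(hlower_nonneg e).trans (hlowerμ e), (hμupper e).trans (hupper_le_one e)⟩
  refine ⟨μ, ζ, ⟨hμ, hsum.trans_le (min_le_left _ _)⟩, hζ, fun e he => ?_, fun e he => ?_, ?_⟩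
  · exact (hμ e).2.antisymm (by simpa [lower, he] using hlowerμ e)
  · exact (hμ e).1.antisymm' (by simpa [upper, he.not_ge] using hμupper e)
  · rcases hupper with rfl | hΓ_le
    · simp only [zero_mul]
    · rw [hsum, min_eq_left hΓ_le]

theorem inner_problem_strong_duality_general (x : E → K) {Γ : K} (hΓ : 0 ≤ Γ) :
    ∃ (μ θ : E → K) (ζ : K), IsFractionalAttack Γ μ ∧ IsDualPrice x θ ζ ∧
      (∀ μ', IsFractionalAttack Γ μ' → ∑ e, x e * μ' e ≤ ∑ e, x e * μ e) ∧
      (∀ θ' ζ', IsDualPrice x θ' ζ' → (∑ e, θ e) + ζ * Γ ≤ (∑ e, θ' e) + ζ' * Γ) ∧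
      ∑ e, x e * μ e = (∑ e, θ e) + ζ * Γ := by
  obtain ⟨μ, ζ, hμ, hζ, hone, hzero, hbudget⟩ := exists_greedy_attack x hΓ
  have hθ := isDualPrice_posPart_sub x hζ
  have hθ_slack (e : E) : (x e - ζ)⁺ * μ e = (x e - ζ)⁺ := by
    rcases le_or_gt (x e) ζ with h | h
    · rw [posPart_of_nonpos (sub_nonpos.mpr h), zero_mul]
    · rw [hone e h, mul_one]
  have hμ_slack (e : E) : x e * μ e = ((x e - ζ)⁺ + ζ) * μ e := by
    rcases lt_or_ge (x e) ζ with h | h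
    · rw [hzero e h, mul_zero, mul_zero]
    · rw [posPart_of_nonneg (sub_nonneg.mpr h), sub_add_cancel]
  have heq := sum_mul_eq_of_complementary_slackness hθ_slack hμ_slack hbudget
  exact ⟨μ, _, ζ, hμ, hθ, fun _ hμ' => (hμ'.sum_mul_le hθ).trans_eq heq.symm,
    fun _ _ hθ' => heq.symm.trans_le (hμ.sum_mul_le hθ'), heq⟩

end LinearOrderedField

/-- Strong LP duality for the adversary's inner problem of the robust flow model:
both the primal and the dual optima are attained and equal. -/
theorem inner_problem_strong_duality {E : Type*} [Fintype E] [Nonempty E]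
    (x : E → ℝ) (hx : ∀ e, 0 ≤ x e) (Γ : ℝ) (hΓ : 0 ≤ Γ) :
    ∃ (μ : E → ℝ) (θ : E → ℝ) (ζ : ℝ),
      ((∀ e, 0 ≤ μ e ∧ μ e ≤ 1) ∧ ∑ e, μ e ≤ Γ) ∧
      ((∀ e, 0 ≤ θ e) ∧ 0 ≤ ζ ∧ ∀ e, x e ≤ θ e + ζ) ∧
      (∀ μ' : E → ℝ, (∀ e, 0 ≤ μ' e ∧ μ' e ≤ 1) → ∑ e, μ' e ≤ Γ →
        ∑ e, x e * μ' e ≤ ∑ e, x e * μ e) ∧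
      (∀ (θ' : E → ℝ) (ζ' : ℝ), (∀ e, 0 ≤ θ' e) → 0 ≤ ζ' →
        (∀ e, x e ≤ θ' e + ζ') →
        (∑ e, θ e) + ζ * Γ ≤ (∑ e, θ' e) + ζ' * Γ) ∧
      ∑ e, x e * μ e = (∑ e, θ e) + ζ * Γ := by
  obtain ⟨μ, θ, ζ, hμ, hθ, hmax, hmin, heq⟩ := inner_problem_strong_duality_general x hΓ
  exact ⟨μ, θ, ζ, hμ, hθ, fun μ' h hsum => hmax μ' ⟨h, hsum⟩,
    fun θ' ζ' h hζ' hle => hmin θ' ζ' ⟨h, hζ', hle⟩, heq⟩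
end

section
/- Let E be a nonempty finite set, Γ ∈ ℕ, and P = { μ : E → ℝ : 0 ≤ μ_e ≤ 1 for every e, Σ_{e∈E} μ_e ≤ Γ }. Let f : (E → ℝ) → ℝ be continuous on P and concave on P. Then there exists μ* ∈ P with μ*_e ∈ {0,1} for every e such that f(μ*) = min_{μ ∈ P} f(μ). Hence, in the adversary's dual optimization problem, the binary attack variables μ can be relaxed to continuous variables in [0,1] without changing the optimal value. -/
/-!
A quasiconcave function on the convex hull of a finite set is bounded below by its least value on
that set, because its superlevel sets are convex. By Krein–Milman a compact convex set with
finitely many extreme points is their convex hull, so it remains to see that the extreme points of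
the attack polytope are binary. If an extreme point had a fractional coordinate, the budget
constraint would be tight there, since otherwise this coordinate could be moved both ways; it would
be the only one, since otherwise mass could be shifted between two of them; but then it would be
the difference of two integers.
-/

open Set

section ExtremePoints

lemma eq_zero_of_mem_extremePoints_of_sub_mem_of_add_mem {𝕜 F : Type*} [Ring 𝕜] [LinearOrder 𝕜]
    [IsStrictOrderedRing 𝕜] [Invertible (2 : 𝕜)] [AddCommGroup F] [Module 𝕜 F] {s : Set F}
    {x d : F} (hx : x ∈ s.extremePoints 𝕜) (hsub : x - d ∈ s) (hadd : x + d ∈ s) : d = 0 :=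
  sub_eq_self.1 (hx.2 hsub hadd (mem_openSegment_sub_add x d))

lemma exists_isMinOn_convexHull_of_quasiconcaveOn {𝕜 F β : Type*} [Semiring 𝕜] [PartialOrder 𝕜]
    [AddCommMonoid F] [Module 𝕜 F] [LinearOrder β] {s : Set F} {f : F → β} (hs : s.Finite)
    (hne : s.Nonempty) (hf : QuasiconcaveOn 𝕜 (convexHull 𝕜 s) f) :
    ∃ x ∈ s, IsMinOn f (convexHull 𝕜 s) x := by
  obtain ⟨x, hxs, hx⟩ := Set.exists_min_image s f hs hne
  have hsub : convexHull 𝕜 s ⊆ {y ∈ convexHull 𝕜 s | f x ≤ f y} :=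
    convexHull_min (fun y hy ↦ ⟨subset_convexHull 𝕜 s hy, hx y hy⟩) (hf (f x))
  exact ⟨x, hxs, fun y hy ↦ (hsub hy).2⟩

variable {F : Type*} [AddCommGroup F] [Module ℝ F] [TopologicalSpace F] [T2Space F]
  [IsTopologicalAddGroup F] [ContinuousSMul ℝ F] [LocallyConvexSpace ℝ F] {s : Set F}

lemma convexHull_extremePoints_of_finite (hs : IsCompact s) (hconv : Convex ℝ s)
    (hfin : (s.extremePoints ℝ).Finite) : convexHull ℝ (s.extremePoints ℝ) = s := by
  rw [← (hfin.isClosed_convexHull ℝ).closure_eq, closure_convexHull_extremePoints hs hconv]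

lemma exists_mem_extremePoints_isMinOn_of_quasiconcaveOn {β : Type*} [LinearOrder β] {f : F → β}
    (hs : IsCompact s) (hconv : Convex ℝ s) (hne : s.Nonempty)
    (hfin : (s.extremePoints ℝ).Finite) (hf : QuasiconcaveOn ℝ s f) :
    ∃ x ∈ s.extremePoints ℝ, IsMinOn f s x := by
  have hull := convexHull_extremePoints_of_finite hs hconv hfin
  rw [← hull] at hf
  simpa only [hull] using
    exists_isMinOn_convexHull_of_quasiconcaveOn hfin (hs.extremePoints_nonempty hne) hf

end ExtremePoints

/-- The adversary's relaxed feasible region: attack vectors with entries in `[0, 1]` and total at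
most the budget `Γ`, which is taken to be an arbitrary real number. -/
def attackPolytope (E : Type*) [Fintype E] (Γ : ℝ) : Set (E → ℝ) :=
  {μ | (∀ e, 0 ≤ μ e ∧ μ e ≤ 1) ∧ ∑ e, μ e ≤ Γ}

namespace attackPolytope

variable {E : Type*} [Fintype E] {Γ : ℝ} {μ : E → ℝ}

lemma eq_Icc_inter_sum_le : attackPolytope E Γ = Icc 0 1 ∩ {μ | ∑ e, μ e ≤ Γ} := by
  ext μ
  simp only [attackPolytope, mem_ofPred_eq, mem_inter_iff, mem_Icc, Pi.le_def, Pi.zero_apply,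
    Pi.one_apply, forall_and]

lemma isCompact : IsCompact (attackPolytope E Γ) := by
  rw [eq_Icc_inter_sum_le]
  exact isCompact_Icc.inter_right (isClosed_le (by fun_prop) continuous_const)

lemma convex : Convex ℝ (attackPolytope E Γ) := by
  rw [eq_Icc_inter_sum_le]
  have hlin : IsLinearMap ℝ fun μ : E → ℝ ↦ ∑ e, μ e :=
    ⟨fun _ _ ↦ Finset.sum_add_distrib, fun _ _ ↦ (Finset.mul_sum ..).symm⟩
  exact (convex_Icc 0 1).inter (convex_halfSpace_le hlin Γ)

lemma nonempty (hΓ : 0 ≤ Γ) : (attackPolytope E Γ).Nonempty :=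
  ⟨0, by simp [attackPolytope, hΓ]⟩

lemma add_mem {d : E → ℝ} (hd : ∀ e, |d e| ≤ min (μ e) (1 - μ e))
    (hsum : |∑ e, d e| ≤ Γ - ∑ e, μ e) : μ + d ∈ attackPolytope E Γ := by
  refine ⟨fun e ↦ ?_, ?_⟩
  · obtain ⟨hlow, hupp⟩ := le_min_iff.1 (hd e)
    rw [Pi.add_apply]
    constructor <;> linarith [neg_le_abs (d e), le_abs_self (d e)]
  · simp only [Pi.add_apply, Finset.sum_add_distrib]
    linarith [le_abs_self (∑ e, d e)]

lemma eq_zero_of_mem_extremePoints_of_abs_le {d : E → ℝ}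
    (hμ : μ ∈ (attackPolytope E Γ).extremePoints ℝ) (hd : ∀ e, |d e| ≤ min (μ e) (1 - μ e))
    (hsum : |∑ e, d e| ≤ Γ - ∑ e, μ e) : d = 0 := by
  refine eq_zero_of_mem_extremePoints_of_sub_mem_of_add_mem hμ ?_ (add_mem hd hsum)
  rw [sub_eq_add_neg]
  exact add_mem (by simpa using hd) (by simpa using hsum)

lemma min_self_one_sub_nonneg (hμ : μ ∈ attackPolytope E Γ) (e : E) :
    0 ≤ min (μ e) (1 - μ e) :=
  le_min (hμ.1 e).1 (sub_nonneg.2 (hμ.1 e).2)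

lemma sum_eq_of_mem_extremePoints_of_mem_Ioo (hμ : μ ∈ (attackPolytope E Γ).extremePoints ℝ)
    {i : E} (hi : μ i ∈ Ioo 0 1) : ∑ e, μ e = Γ := by
  classical
  by_contra hne
  have hslack : 0 < Γ - ∑ e, μ e := sub_pos.2 (lt_of_le_of_ne hμ.1.2 hne)
  obtain ⟨ε, hε, hεi, hεΓ⟩ : ∃ ε > 0, ε ≤ min (μ i) (1 - μ i) ∧ ε ≤ Γ - ∑ e, μ e :=
    ⟨_, lt_min (lt_min hi.1 (sub_pos.2 hi.2)) hslack, min_le_left _ _, min_le_right _ _⟩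
  have hzero : Pi.single i ε = (0 : E → ℝ) := by
    refine eq_zero_of_mem_extremePoints_of_abs_le hμ (fun e ↦ ?_) ?_
    · rcases eq_or_ne e i with rfl | he
      · rwa [Pi.single_eq_same, abs_of_pos hε]
      · simpa only [Pi.single_eq_of_ne he, abs_zero] using min_self_one_sub_nonneg hμ.1 e
    · simpa [abs_of_pos hε] using hεΓ
  exact hε.ne' (Pi.single_eq_zero_iff.1 hzero)

lemma eq_of_mem_extremePoints_of_mem_Ioo (hμ : μ ∈ (attackPolytope E Γ).extremePoints ℝ)
    {i j : E} (hi : μ i ∈ Ioo 0 1) (hj : μ j ∈ Ioo 0 1) : i = j := by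
  classical
  by_contra hij
  obtain ⟨ε, hε, hεi, hεj⟩ : ∃ ε > 0, ε ≤ min (μ i) (1 - μ i) ∧ ε ≤ min (μ j) (1 - μ j) :=
    ⟨_, lt_min (lt_min hi.1 (sub_pos.2 hi.2)) (lt_min hj.1 (sub_pos.2 hj.2)),
      min_le_left _ _, min_le_right _ _⟩
  have hzero : Pi.single i ε - Pi.single j ε = (0 : E → ℝ) := by
    refine eq_zero_of_mem_extremePoints_of_abs_le hμ (fun e ↦ ?_) ?_
    · rcases eq_or_ne e i with rfl | hei
      · simpa [hij, abs_of_pos hε] using hεi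
      rcases eq_or_ne e j with rfl | hej
      · simpa [hei, abs_of_pos hε] using hεj
      · simpa [hei, hej] using min_self_one_sub_nonneg hμ.1 e
    · simpa [Finset.sum_sub_distrib] using hμ.1.2
  have hεzero : ε = 0 := by simpa [hij] using congrFun hzero i
  exact hε.ne' hεzero

lemma eq_zero_or_eq_one_of_notMem_Ioo (hμ : μ ∈ attackPolytope E Γ) {e : E}
    (he : μ e ∉ Ioo 0 1) : μ e = 0 ∨ μ e = 1 := by
  have hmem : μ e ∈ Icc 0 1 \ Ioo 0 1 := ⟨hμ.1 e, he⟩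
  rwa [Icc_sdiff_Ioo_same zero_le_one] at hmem

theorem eq_zero_or_eq_one_of_mem_extremePoints {Γ : ℤ}
    (hμ : μ ∈ (attackPolytope E Γ).extremePoints ℝ) (i : E) : μ i = 0 ∨ μ i = 1 := by
  classical
  refine eq_zero_or_eq_one_of_notMem_Ioo hμ.1 fun hi ↦ ?_
  have hinteger : ∀ e ∈ Finset.univ.erase i, μ e ∈ (Int.castAddHom ℝ).range := by
    intro e he
    have hfrac : μ e ∉ Ioo 0 1 := fun hfrac ↦
      Finset.ne_of_mem_erase he (eq_of_mem_extremePoints_of_mem_Ioo hμ hfrac hi)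
    rcases eq_zero_or_eq_one_of_notMem_Ioo hμ.1 hfrac with h | h
    · exact ⟨0, by simp [h]⟩
    · exact ⟨1, by simp [h]⟩
  obtain ⟨k, hk⟩ := sum_mem hinteger
  have hμi : μ i = ((Γ - k : ℤ) : ℝ) := by
    rw [Int.cast_sub, ← sum_eq_of_mem_extremePoints_of_mem_Ioo hμ hi,
      ← Finset.add_sum_erase _ μ (Finset.mem_univ i), ← hk,
      Int.coe_castAddHom, add_sub_cancel_right]
  have hpos : 0 < Γ - k := by exact_mod_cast hμi ▸ hi.1
  have hlt : Γ - k < 1 := by exact_mod_cast hμi ▸ hi.2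
  lia

lemma finite_extremePoints (Γ : ℤ) : ((attackPolytope E Γ).extremePoints ℝ).Finite :=
  (Finite.pi' fun _ : E ↦ toFinite {(0 : ℝ), 1}).subset
    fun _ hμ ↦ eq_zero_or_eq_one_of_mem_extremePoints hμ

end attackPolytope

theorem concave_min_at_binary_point_general {E β : Type*} [Fintype E] [LinearOrder β] (Γ : ℕ)
    (f : (E → ℝ) → β) (hf : QuasiconcaveOn ℝ (attackPolytope E Γ) f) :
    ∃ μstar ∈ attackPolytope E Γ, (∀ e, μstar e = 0 ∨ μstar e = 1) ∧
      ∀ μ ∈ attackPolytope E Γ, f μstar ≤ f μ := by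
  rw [← Int.cast_natCast Γ] at hf ⊢
  obtain ⟨μstar, hext, hmin⟩ := exists_mem_extremePoints_isMinOn_of_quasiconcaveOn
    attackPolytope.isCompact attackPolytope.convex (attackPolytope.nonempty (by simp))
    (attackPolytope.finite_extremePoints Γ) hf
  exact ⟨μstar, hext.1, attackPolytope.eq_zero_or_eq_one_of_mem_extremePoints hext, hmin⟩

/-- A function continuous and concave on the relaxed attack polytope
`P = {μ : 0 ≤ μ_e ≤ 1, Σ_e μ_e ≤ Γ}` attains its minimum over `P` at a binary
point; hence the binary attack variables can be relaxed without changing the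
optimal value. -/
theorem concave_min_at_binary_point {E : Type*} [Fintype E] [Nonempty E] (Γ : ℕ)
    (f : (E → ℝ) → ℝ)
    (hfc : ContinuousOn f
      {μ : E → ℝ | (∀ e, 0 ≤ μ e ∧ μ e ≤ 1) ∧ ∑ e, μ e ≤ (Γ : ℝ)})
    (hconc : ConcaveOn ℝ
      {μ : E → ℝ | (∀ e, 0 ≤ μ e ∧ μ e ≤ 1) ∧ ∑ e, μ e ≤ (Γ : ℝ)} f) :
    ∃ μstar : E → ℝ,
      ((∀ e, 0 ≤ μstar e ∧ μstar e ≤ 1) ∧ ∑ e, μstar e ≤ (Γ : ℝ)) ∧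
      (∀ e, μstar e = 0 ∨ μstar e = 1) ∧
      ∀ μ : E → ℝ, ((∀ e, 0 ≤ μ e ∧ μ e ≤ 1) ∧ ∑ e, μ e ≤ (Γ : ℝ)) →
        f μstar ≤ f μ :=
  concave_min_at_binary_point_general Γ f hconc.quasiconcaveOn
end

section
/- For every flow network and every budget Γ ∈ ℕ, let Ψ = { μ : E → {0,1} : μ_{e_ts} = 0, Σ_{e∈E} μ_e ≤ Γ } be the (nonempty, finite) set of feasible attacks, and define the adaptive value AV(x) = min_{μ ∈ Ψ} M(x, μ) for x ∈ X. Then the administrator's robust and adaptive maximum flow problem has an optimal solution: there exists x* ∈ X such that AV(x*) ≥ AV(x) for every x ∈ X. -/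
attribute [local instance] Classical.propDecidable

namespace FlowNetwork

variable (N : FlowNetwork)

/-- `Ψ`: the set of feasible attacks under budget `Γ`. -/
def Psi (Γ : ℕ) : Set (N.V × N.V → ℝ) :=
  {μ | (∀ e, μ e = 0 ∨ μ e = 1) ∧ (∀ e, e ∉ N.E → μ e = 0) ∧
    μ (N.t, N.s) = 0 ∧ ∑ e ∈ N.E, μ e ≤ (Γ : ℝ)}

/-- `AV(x) = min_{μ ∈ Ψ} M(x, μ)`: the adaptive value of the flow `x`. -/
noncomputable def AV (Γ : ℕ) (x : N.V × N.V → ℝ) : ℝ :=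
  sInf ((fun μ => N.MVal x μ) '' N.Psi Γ)

end FlowNetwork

/-!
The recourse costs `z` in `M(x, μ)` can be eliminated: the best choice is the excess
`max (y - x) 0` on `Λ_{σ_μ}`. What is left is the maximum of a jointly continuous function of
`(x, y)` over recourse flows `y`, which form a closed condition and, for feasible `x`, stay in a
fixed box because no edge carries more than the total capacity. Hence `x ↦ M(x, μ)` is upper
semicontinuous on feasible flows, and so is the minimum `AV` over attacks. Feasible flows are
unbounded off the edge set, but `AV` only sees the values on edges, and the feasible flows
vanishing off the edge set form a compact set, on which `AV` attains its maximum.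
-/

section UpperSemicontinuous

open Set Topology

/-- The upper semicontinuity half of Berge's maximum theorem. -/
theorem upperSemicontinuousOn_sSup_image_fiber {α β γ : Type*} [TopologicalSpace α]
    [TopologicalSpace β] [ConditionallyCompleteLinearOrder γ] {f : α × β → γ} {s : Set α}
    {K : Set β} {C : Set (α × β)} (hf : UpperSemicontinuous f) (hK : IsCompact K)
    (hC : IsClosed C) (hne : ∀ x ∈ s, ∃ y ∈ K, (x, y) ∈ C) :
    UpperSemicontinuousOn (fun x => sSup ((fun y => f (x, y)) '' {y ∈ K | (x, y) ∈ C})) s := by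
  have exists_isGreatest (x) (hx : x ∈ s) : ∃ y ∈ K, (x, y) ∈ C ∧
      IsGreatest ((fun y => f (x, y)) '' {y ∈ K | (x, y) ∈ C}) (f (x, y)) := by
    have fiber_compact : IsCompact {y ∈ K | (x, y) ∈ C} :=
      hK.inter_right (hC.preimage (by fun_prop : Continuous fun y => (x, y)))
    obtain ⟨y, hy, hmax⟩ := UpperSemicontinuousOn.exists_isMaxOn (hne x hx) fiber_compact
      ((hf.comp (by fun_prop : Continuous fun y => (x, y))).upperSemicontinuousOn _)
    exact ⟨y, hy.1, hy.2, mem_image_of_mem _ hy, forall_mem_image.2 fun _ h => hmax h⟩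
  intro x hx a hxa
  have eventually_lt : ∀ᶠ x' in 𝓝 x, ∀ y ∈ K, (x', y) ∈ C → f (x', y) < a := by
    refine hK.eventually_forall_of_forall_eventually fun y hyK => ?_
    by_cases hy : (x, y) ∈ C
    · obtain ⟨y₀, -, -, hy₀⟩ := exists_isGreatest x hx
      have hya : f (x, y) < a :=
        (hy₀.2 (mem_image_of_mem _ ⟨hyK, hy⟩)).trans_lt (hy₀.csSup_eq ▸ hxa)
      exact (hf (x, y) a hya).mono fun _ h _ => h
    · exact (hC.isOpen_compl.eventually_mem hy).mono fun _ h h' => absurd h' h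
  filter_upwards [nhdsWithin_le_nhds eventually_lt, self_mem_nhdsWithin] with x' hlt hx'
  obtain ⟨y, hyK, hyC, hy⟩ := exists_isGreatest x' hx'
  exact hy.csSup_eq.trans_lt (hlt y hyK hyC)

end UpperSemicontinuous

namespace FlowNetwork

open Set

variable {N : FlowNetwork} {x x' y y' μ : N.V × N.V → ℝ} {e : N.V × N.V}

lemma inSum_congr (h : EqOn y y' N.E) (v : N.V) : N.inSum y v = N.inSum y' v :=
  Finset.sum_congr rfl fun _ he => h (Finset.mem_filter.1 he).1

lemma outSum_congr (h : EqOn y y' N.E) (v : N.V) : N.outSum y v = N.outSum y' v :=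
  Finset.sum_congr rfl fun _ he => h (Finset.mem_filter.1 he).1

lemma continuous_inSum (v : N.V) : Continuous fun y => N.inSum y v := by
  unfold inSum
  fun_prop

lemma continuous_outSum (v : N.V) : Continuous fun y => N.outSum y v := by
  unfold outSum
  fun_prop

lemma MSet_congr (h : EqOn x x' N.E) (μ : N.V × N.V → ℝ) : N.MSet x μ = N.MSet x' μ := by
  have h' : ∀ e ∈ N.E, x e = x' e := h
  simp +contextual only [MSet, h']

lemma AV_congr (h : EqOn x x' N.E) (Γ : ℕ) : N.AV Γ x = N.AV Γ x' := by
  simp only [AV, MVal, MSet_congr h]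

/-- The sum of the capacities of all edges, a common upper bound for feasible flows and for the
flows that respond to an attack on them. -/
noncomputable def totalCapacity (N : FlowNetwork) : ℝ := ∑ e ∈ N.E, N.U e

lemma totalCapacity_nonneg (N : FlowNetwork) : 0 ≤ N.totalCapacity :=
  Finset.sum_nonneg fun e _ => N.U_nonneg e

lemma U_le_totalCapacity (he : e ∈ N.E) : N.U e ≤ N.totalCapacity :=
  Finset.single_le_sum (fun e _ => N.U_nonneg e) he

lemma Feasible.ts_le_totalCapacity (hx : N.Feasible x) : x (N.t, N.s) ≤ N.totalCapacity := by
  obtain ⟨x_nonneg, conservation, x_le_U⟩ := hx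
  calc x (N.t, N.s)
    _ ≤ N.outSum x N.t :=
      Finset.single_le_sum (f := x) (fun e _ => x_nonneg e) (by simp [N.ts_mem])
    _ = N.inSum x N.t := (conservation _ N.s_ne_t.symm).symm
    _ ≤ N.inSum N.U N.t := by
      refine Finset.sum_le_sum fun e he => ?_
      obtain ⟨heE, het⟩ := Finset.mem_filter.1 he
      exact x_le_U e heE fun hts => N.s_ne_t (by rw [← het, hts])
    _ ≤ N.totalCapacity :=
      Finset.sum_le_sum_of_subset_of_nonneg (Finset.filter_subset _ _) fun e _ _ => N.U_nonneg e

lemma Feasible.le_totalCapacity (hx : N.Feasible x) (he : e ∈ N.E) : x e ≤ N.totalCapacity := by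
  obtain rfl | hts := eq_or_ne e (N.t, N.s)
  · exact hx.ts_le_totalCapacity
  · exact (hx.2.2 e he hts).trans (U_le_totalCapacity he)

lemma feasible_zero (N : FlowNetwork) : N.Feasible 0 :=
  ⟨fun _ => le_rfl, fun v _ => by simp [inSum, outSum], fun e _ _ => N.U_nonneg e⟩

lemma Feasible.indicator_edges (hx : N.Feasible x) :
    N.Feasible ((N.E : Set (N.V × N.V)).indicator x) := by
  have eq_x : EqOn ((N.E : Set (N.V × N.V)).indicator x) x N.E := eqOn_indicator
  refine ⟨indicator_nonneg fun e _ => hx.1 e, fun v hv => ?_, fun e he hts => ?_⟩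
  · rw [inSum_congr eq_x, outSum_congr eq_x, hx.2.1 v hv]
  · rw [eq_x he]
    exact hx.2.2 e he hts

lemma isClosed_setOf_feasible (N : FlowNetwork) : IsClosed {x | N.Feasible x} := by
  simp only [Feasible, ofPred_and, ofPred_forall]
  refine .inter ?_ (.inter ?_ ?_)
  · exact isClosed_iInter fun e => isClosed_le (by fun_prop) (by fun_prop)
  · exact isClosed_biInter fun v _ => isClosed_eq (continuous_inSum v) (continuous_outSum v)
  · exact isClosed_biInter fun e _ => isClosed_iInter fun _ =>
      isClosed_le (by fun_prop) (by fun_prop)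

/-- The functions with values in `[0, totalCapacity]` that vanish off the edge set: a compact box
that contains every feasible flow up to its irrelevant values on non-edges. -/
noncomputable def edgeBox (N : FlowNetwork) : Set (N.V × N.V → ℝ) :=
  Icc 0 ((N.E : Set (N.V × N.V)).indicator fun _ => N.totalCapacity)

lemma isCompact_edgeBox (N : FlowNetwork) : IsCompact N.edgeBox := isCompact_Icc

lemma indicator_edges_mem_edgeBox (h₀ : ∀ e ∈ N.E, 0 ≤ x e)
    (h₁ : ∀ e ∈ N.E, x e ≤ N.totalCapacity) :
    (N.E : Set (N.V × N.V)).indicator x ∈ N.edgeBox :=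
  ⟨indicator_nonneg h₀, fun _ => indicator_le_indicator' fun he => h₁ _ he⟩

lemma zero_mem_edgeBox (N : FlowNetwork) : 0 ∈ N.edgeBox :=
  ⟨le_rfl, indicator_nonneg fun _ _ => N.totalCapacity_nonneg⟩

/-- The flows `y` by which the administrator may respond to the attack `μ` on the flow `x`: the
constraints of the linear program defining `M(x, μ)` that do not involve `z`. -/
def IsRecourse (N : FlowNetwork) (μ x y : N.V × N.V → ℝ) : Prop :=
  (∀ e ∈ N.E, 0 ≤ y e) ∧
  (∀ v, v ≠ N.s → N.outSum y v ≤ N.inSum y v) ∧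
  (∀ e ∈ N.E, e ∉ N.lambdaSigma μ → y e ≤ x e) ∧
  (∀ e ∈ N.E, e ∈ N.lambdaSigma μ → y e ≤ (1 - μ e) * N.U e)

/-- The objective of the linear program defining `M(x, μ)` at the recourse flow `y` and the
cheapest `z` compatible with it. -/
noncomputable def recourseValue (N : FlowNetwork) (μ x y : N.V × N.V → ℝ) : ℝ :=
  y (N.t, N.s) - ∑ e ∈ N.E, N.p e * (N.lambdaSigma μ).indicator (fun e => max (y e - x e) 0) e
    - ∑ e ∈ N.E, N.p e * x e

lemma IsRecourse.congr (hy : N.IsRecourse μ x y) (h : EqOn y' y N.E) : N.IsRecourse μ x y' := by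
  obtain ⟨y_nonneg, conservation, y_le_x, y_le_U⟩ := hy
  refine ⟨fun e he => ?_, fun v hv => ?_, fun e he hΛ => ?_, fun e he hΛ => ?_⟩
  · exact (y_nonneg e he).trans_eq (h he).symm
  · rw [outSum_congr h, inSum_congr h]
    exact conservation v hv
  · exact (h he).trans_le (y_le_x e he hΛ)
  · exact (h he).trans_le (y_le_U e he hΛ)

lemma recourseValue_congr (h : EqOn y y' N.E) (μ x : N.V × N.V → ℝ) :
    N.recourseValue μ x y = N.recourseValue μ x y' := by
  have h' : ∀ e ∈ N.E, y e = y' e := h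
  simp +contextual only [recourseValue, indicator_apply, h', N.ts_mem]

lemma isRecourse_zero (hμ : μ ≤ 1) (hx : 0 ≤ x) : N.IsRecourse μ x 0 :=
  ⟨fun _ _ => le_rfl, fun v _ => by simp [inSum, outSum], fun e _ _ => hx e,
    fun e _ _ => mul_nonneg (sub_nonneg.2 (hμ e)) (N.U_nonneg e)⟩

lemma IsRecourse.le_totalCapacity (hμ : 0 ≤ μ) (hx : N.Feasible x) (hy : N.IsRecourse μ x y)
    (he : e ∈ N.E) : y e ≤ N.totalCapacity := by
  obtain ⟨-, -, y_le_x, y_le_U⟩ := hy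
  by_cases hΛ : e ∈ N.lambdaSigma μ
  · calc y e
      _ ≤ (1 - μ e) * N.U e := y_le_U e he hΛ
      _ ≤ N.U e := mul_le_of_le_one_left (N.U_nonneg e) (sub_le_self _ (hμ e))
      _ ≤ N.totalCapacity := U_le_totalCapacity he
  · exact (y_le_x e he hΛ).trans (hx.le_totalCapacity he)

lemma isClosed_setOf_isRecourse (N : FlowNetwork) (μ : N.V × N.V → ℝ) :
    IsClosed {q : (N.V × N.V → ℝ) × (N.V × N.V → ℝ) | N.IsRecourse μ q.1 q.2} := by
  simp only [IsRecourse, ofPred_and, ofPred_forall]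
  refine .inter ?_ (.inter ?_ (.inter ?_ ?_))
  · exact isClosed_biInter fun e _ => isClosed_le (by fun_prop) (by fun_prop)
  · exact isClosed_biInter fun v _ => isClosed_le ((continuous_outSum v).comp continuous_snd)
      ((continuous_inSum v).comp continuous_snd)
  all_goals
    exact isClosed_biInter fun e _ => isClosed_iInter fun _ =>
      isClosed_le (by fun_prop) (by fun_prop)

lemma continuous_recourseValue (N : FlowNetwork) (μ : N.V × N.V → ℝ) :
    Continuous fun q : (N.V × N.V → ℝ) × (N.V × N.V → ℝ) => N.recourseValue μ q.1 q.2 := by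
  have continuous_excess (e : N.V × N.V) :
      Continuous fun q : (N.V × N.V → ℝ) × (N.V × N.V → ℝ) =>
        (N.lambdaSigma μ).indicator (fun e => max (q.2 e - q.1 e) 0) e := by
    by_cases hΛ : e ∈ N.lambdaSigma μ
    · simp only [indicator_of_mem hΛ]
      fun_prop
    · simp only [indicator_of_notMem hΛ, continuous_const]
  unfold recourseValue
  fun_prop

lemma IsRecourse.recourseValue_mem_MSet (hy : N.IsRecourse μ x y) :
    N.recourseValue μ x y ∈ N.MSet x μ := by
  obtain ⟨y_nonneg, conservation, y_le_x, y_le_U⟩ := hy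
  refine ⟨y, (N.lambdaSigma μ).indicator fun e => max (y e - x e) 0, y_nonneg,
    fun e _ => indicator_nonneg (fun _ _ => le_max_right _ _) e, conservation, y_le_x, y_le_U,
    fun e _ hΛ => ?_, rfl⟩
  rw [indicator_of_mem hΛ]
  exact le_max_left _ _

lemma exists_isRecourse_le_recourseValue {r : ℝ} (hr : r ∈ N.MSet x μ) :
    ∃ y, N.IsRecourse μ x y ∧ r ≤ N.recourseValue μ x y := by
  obtain ⟨y, z, y_nonneg, z_nonneg, conservation, y_le_x, y_le_U, excess_le_z, rfl⟩ := hr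
  refine ⟨y, ⟨y_nonneg, conservation, y_le_x, y_le_U⟩, ?_⟩
  have excess_le (e) (he : e ∈ N.E) :
      (N.lambdaSigma μ).indicator (fun e => max (y e - x e) 0) e ≤ z e :=
    indicator_apply_le' (fun hΛ => max_le (excess_le_z e he hΛ) (z_nonneg e he))
      fun _ => z_nonneg e he
  unfold recourseValue
  gcongr with e he
  · exact N.p_nonneg e
  · exact excess_le e he

lemma MVal_eq_sSup_recourseValue (hμ : 0 ≤ μ) (hx : N.Feasible x) :
    N.MVal x μ = sSup (N.recourseValue μ x '' {y ∈ N.edgeBox | N.IsRecourse μ x y}) := by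
  refine csSup_eq_csSup_of_forall_exists_le (fun r hr => ?_) ?_
  · obtain ⟨y, hy, hry⟩ := exists_isRecourse_le_recourseValue hr
    have eq_y : EqOn ((N.E : Set (N.V × N.V)).indicator y) y N.E := eqOn_indicator
    have mem_box : (N.E : Set (N.V × N.V)).indicator y ∈ N.edgeBox :=
      indicator_edges_mem_edgeBox hy.1 fun _ he => hy.le_totalCapacity hμ hx he
    exact ⟨_, mem_image_of_mem _ ⟨mem_box, hy.congr eq_y⟩,
      hry.trans_eq (recourseValue_congr eq_y μ x).symm⟩
  · exact forall_mem_image.2 fun y hy => ⟨_, hy.2.recourseValue_mem_MSet, le_rfl⟩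

lemma upperSemicontinuousOn_MVal (hμ₀ : 0 ≤ μ) (hμ₁ : μ ≤ 1) :
    UpperSemicontinuousOn (fun x => N.MVal x μ) {x | N.Feasible x} := by
  have usc_sSup := upperSemicontinuousOn_sSup_image_fiber (s := {x | N.Feasible x})
    (N.continuous_recourseValue μ).upperSemicontinuous N.isCompact_edgeBox
    (N.isClosed_setOf_isRecourse μ)
    fun x hx => ⟨0, N.zero_mem_edgeBox, isRecourse_zero hμ₁ hx.1⟩
  exact fun x hx => UpperSemicontinuousWithinAt.congr_of_eventuallyEq (usc_sSup x hx) hx <|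
    eventually_nhdsWithin_of_forall fun x hx => (MVal_eq_sSup_recourseValue hμ₀ hx).symm

lemma nonneg_of_mem_Psi {Γ : ℕ} (hμ : μ ∈ N.Psi Γ) : 0 ≤ μ := fun e => by
  rcases hμ.1 e with h | h <;> simp [h]

lemma le_one_of_mem_Psi {Γ : ℕ} (hμ : μ ∈ N.Psi Γ) : μ ≤ 1 := fun e => by
  rcases hμ.1 e with h | h <;> simp [h]

lemma finite_Psi (N : FlowNetwork) (Γ : ℕ) : (N.Psi Γ).Finite :=
  (Finite.pi' fun _ => toFinite ({0, 1} : Set ℝ)).subset fun _ hμ e => hμ.1 e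

lemma upperSemicontinuousOn_AV (N : FlowNetwork) (Γ : ℕ) :
    UpperSemicontinuousOn (N.AV Γ) {x | N.Feasible x} := by
  have : Finite (N.Psi Γ) := N.finite_Psi Γ
  have AV_eq_iInf : N.AV Γ = fun x => ⨅ μ : N.Psi Γ, N.MVal x μ := funext fun _ => sInf_image'
  rw [AV_eq_iInf]
  exact upperSemicontinuousOn_ciInf (fun _ _ => (finite_range _).bddBelow) fun μ =>
    upperSemicontinuousOn_MVal (nonneg_of_mem_Psi μ.2) (le_one_of_mem_Psi μ.2)

/-- The administrator's robust and adaptive maximum flow problem has an optimal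
solution: some feasible flow maximizes the adaptive value `AV`. -/
theorem exists_robust_adaptive_optimal_flow (N : FlowNetwork) (Γ : ℕ) :
    ∃ xstar, N.Feasible xstar ∧ ∀ x, N.Feasible x → N.AV Γ x ≤ N.AV Γ xstar := by
  have compact : IsCompact (N.edgeBox ∩ {x | N.Feasible x}) :=
    N.isCompact_edgeBox.inter_right N.isClosed_setOf_feasible
  obtain ⟨xstar, ⟨-, xstar_feasible⟩, hmax⟩ := UpperSemicontinuousOn.exists_isMaxOn
    (s := N.edgeBox ∩ {x | N.Feasible x}) ⟨0, N.zero_mem_edgeBox, N.feasible_zero⟩ compact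
    ((N.upperSemicontinuousOn_AV Γ).mono inter_subset_right)
  refine ⟨xstar, xstar_feasible, fun x hx => ?_⟩
  have mem_box : (N.E : Set (N.V × N.V)).indicator x ∈ N.edgeBox :=
    indicator_edges_mem_edgeBox (fun e _ => hx.1 e) fun _ he => hx.le_totalCapacity he
  calc N.AV Γ x
    _ = N.AV Γ ((N.E : Set (N.V × N.V)).indicator x) := (AV_congr eqOn_indicator Γ).symm
    _ ≤ N.AV Γ xstar := hmax ⟨mem_box, hx.indicator_edges⟩

end FlowNetwork
end
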